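/- Let d ≥ 2 be an integer and let V be a finite linearly ordered set. Define a 3-coloring c : V×V → {red, blue, green} of the complete digraph on V by: c(i,i) = green for all i ∈ V, and for all i,j ∈ V with i < j, c(i,j) = red and c(j,i) = blue. Then every monochromatic d-dominating subgraph has a single vertex as its vertex set (namely, it is a single green loop); consequently, any cover of V by monochromatic d-dominating subgraphs has at least |V| members. -/

import Mathlib

/-- The three colors for 3-colorings of complete digraphs. -/
inductive Color3 where
  | red : Color3
  | blue : Color3
  | green : Color3

/-- `U`, together with the color `j`, is the vertex set of a monochromatic `d`-dominating
subgraph of the complete digraph on `V` 3-colored by `c`. -/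
def IsMonoDom3 {V : Type*} (c : V → V → Color3) (d : ℕ) (j : Color3) (U : Set V) : Prop :=
  ∀ S : Finset V, ↑S ⊆ U → S.Nonempty → S.card ≤ d →
    ∃ w ∈ U, ∀ s ∈ S, c s w = j

/-!
In a monochromatic dominating subgraph every vertex has an out-neighbour of the given color. The
maximum of a finite nonempty set has no red out-neighbour in it and the minimum no blue one, so the
color is green. A green edge is a loop, so two vertices with a common green out-neighbour coincide,
and a pair of distinct vertices cannot be dominated. Distinct vertices therefore lie in distinct
members of a cover.
-/

universe u v

namespace IsMonoDom3

variable {V : Type*} {c : V → V → Color3} {d : ℕ} {j : Color3} {U : Set V}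

theorem exists_eq_and_eq (h : IsMonoDom3 c d j U) (hd : 2 ≤ d) {u v : V} (hu : u ∈ U)
    (hv : v ∈ U) : ∃ w ∈ U, c u w = j ∧ c v w = j := by
  classical
  simpa using h {u, v} (by simp [Set.insert_subset_iff, hu, hv]) (by simp)
    (Finset.card_le_two.trans hd)

theorem exists_eq (h : IsMonoDom3 c d j U) (hd : 1 ≤ d) {v : V} (hv : v ∈ U) :
    ∃ w ∈ U, c v w = j := by
  simpa using h {v} (by simpa using hv) (by simp) (by simpa using hd)

theorem infinite_of_imp_lt [Preorder V] (h : IsMonoDom3 c d j U) (hd : 1 ≤ d) (hU : U.Nonempty)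
    (hlt : ∀ v w, c v w = j → v < w) : U.Infinite := by
  intro hfin
  obtain ⟨m, hm⟩ := hfin.exists_maximal hU
  obtain ⟨w, hw, hmw⟩ := h.exists_eq hd hm.prop
  exact hm.not_gt hw (hlt m w hmw)

theorem subsingleton_of_imp_eq (h : IsMonoDom3 c d j U) (hd : 2 ≤ d)
    (heq : ∀ u v w, c u w = j → c v w = j → u = v) : U.Subsingleton := by
  intro u hu v hv
  obtain ⟨w, -, huw, hvw⟩ := h.exists_eq_and_eq hd hu hv
  exact heq u v w huw hvw

end IsMonoDom3

/-- The order coloring of the complete digraph on `V`: loops are green, edges going up are red and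
edges going down are blue. -/
structure IsOrderColoring {V : Type*} [Preorder V] (c : V → V → Color3) : Prop where
  green_self : ∀ i, c i i = Color3.green
  red_of_lt : ∀ i j, i < j → c i j = Color3.red
  blue_of_lt : ∀ i j, i < j → c j i = Color3.blue

namespace IsOrderColoring

variable {V : Type*} [LinearOrder V] {c : V → V → Color3}

theorem lt_of_eq_red (hc : IsOrderColoring c) {v w : V} (h : c v w = Color3.red) : v < w := by
  rcases lt_trichotomy v w with hlt | rfl | hgt
  · exact hlt
  · simp [hc.green_self] at h
  · simp [hc.blue_of_lt _ _ hgt] at h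

theorem lt_of_eq_blue (hc : IsOrderColoring c) {v w : V} (h : c v w = Color3.blue) : w < v := by
  rcases lt_trichotomy v w with hlt | rfl | hgt
  · simp [hc.red_of_lt _ _ hlt] at h
  · simp [hc.green_self] at h
  · exact hgt

theorem eq_of_eq_green (hc : IsOrderColoring c) {v w : V} (h : c v w = Color3.green) : v = w := by
  rcases lt_trichotomy v w with hlt | heq | hgt
  · simp [hc.red_of_lt _ _ hlt] at h
  · exact heq
  · simp [hc.blue_of_lt _ _ hgt] at h

theorem eq_green_of_finite (hc : IsOrderColoring c) {d : ℕ} (hd : 1 ≤ d) {U : Set V} {j : Color3}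
    (hfin : U.Finite) (hU : U.Nonempty) (h : IsMonoDom3 c d j U) : j = Color3.green := by
  cases j with
  | red => exact absurd hfin (h.infinite_of_imp_lt hd hU fun _ _ => hc.lt_of_eq_red)
  | blue =>
    exact absurd hfin (h.infinite_of_imp_lt (V := Vᵒᵈ) hd hU fun _ _ => hc.lt_of_eq_blue)
  | green => rfl

theorem exists_eq_singleton (hc : IsOrderColoring c) {d : ℕ} (hd : 2 ≤ d) {U : Set V} {j : Color3}
    (hfin : U.Finite) (hU : U.Nonempty) (h : IsMonoDom3 c d j U) :
    ∃ v, U = {v} ∧ j = Color3.green := by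
  obtain rfl := hc.eq_green_of_finite (one_le_two.trans hd) hfin hU h
  have hsub : U.Subsingleton := h.subsingleton_of_imp_eq hd fun _ _ _ huw hvw =>
    (hc.eq_of_eq_green huw).trans (hc.eq_of_eq_green hvw).symm
  obtain ⟨v, hv⟩ := hU
  exact ⟨v, hsub.eq_singleton_of_mem hv, rfl⟩

end IsOrderColoring

theorem lift_mk_le_of_iUnion_eq_univ_of_subsingleton {α : Type u} {ι : Type v} {U : ι → Set α}
    (hcov : ⋃ i, U i = Set.univ) (hU : ∀ i, (U i).Subsingleton) :
    Cardinal.lift.{v} (Cardinal.mk α) ≤ Cardinal.lift.{u} (Cardinal.mk ι) := by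
  choose f hf using Set.iUnion_eq_univ_iff.1 hcov
  have hinj : Function.Injective f := fun a b hab => hU (f a) (hf a) (hab ▸ hf b)
  exact Cardinal.lift_mk_le_lift_mk_of_injective hinj

theorem three_colors_no_bound_general {V : Type u} [LinearOrder V] {d : ℕ} (hd : 2 ≤ d)
    {c : V → V → Color3} (hc : IsOrderColoring c) :
    (∀ (U : Set V) (j : Color3), U.Finite → U.Nonempty → IsMonoDom3 c d j U →
      ∃ v : V, U = {v} ∧ j = Color3.green) ∧
    (∀ (ι : Type v) (U : ι → Set V) (j : ι → Color3), (⋃ i, U i) = Set.univ →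
      (∀ i, (U i).Finite) → (∀ i, IsMonoDom3 c d (j i) (U i)) →
      Cardinal.lift.{v} (Cardinal.mk V) ≤ Cardinal.lift.{u} (Cardinal.mk ι)) := by
  refine ⟨fun _ _ => hc.exists_eq_singleton hd, fun ι U j hcov hfin hdom => ?_⟩
  refine lift_mk_le_of_iUnion_eq_univ_of_subsingleton hcov fun i => ?_
  rcases (U i).eq_empty_or_nonempty with hempty | hne
  · exact hempty ▸ Set.subsingleton_empty
  · obtain ⟨v, hv, -⟩ := hc.exists_eq_singleton hd (hfin i) hne (hdom i)
    exact hv ▸ Set.subsingleton_singleton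

/-- In the 3-coloring of the complete digraph on a finite linearly ordered set `V`
with green loops, red edges going up and blue edges going down, every (nonempty)
monochromatic `d`-dominating subgraph is a single green loop; consequently every
cover by monochromatic `d`-dominating subgraphs has at least `|V|` members. -/
theorem three_colors_no_bound {V : Type*} [Fintype V] [LinearOrder V]
    (d : ℕ) (hd : 2 ≤ d) (c : V → V → Color3)
    (hgreen : ∀ i : V, c i i = Color3.green)
    (hred : ∀ i j : V, i < j → c i j = Color3.red)
    (hblue : ∀ i j : V, i < j → c j i = Color3.blue) :
    (∀ (U : Set V) (jc : Color3), U.Nonempty → IsMonoDom3 c d jc U →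
      ∃ v : V, U = {v} ∧ jc = Color3.green) ∧
    (∀ (t : ℕ) (U : Fin t → Set V) (jc : Fin t → Color3),
      (⋃ i, U i) = Set.univ → (∀ i, IsMonoDom3 c d (jc i) (U i)) →
      Fintype.card V ≤ t) := by
  obtain ⟨hsingle, hcover⟩ := three_colors_no_bound_general hd ⟨hgreen, hred, hblue⟩
  exact ⟨fun U jc => hsingle U jc U.toFinite, fun t U jc hcov hdom => by
    simpa using hcover (Fin t) U jc hcov (fun i => (U i).toFinite) hdom⟩
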